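/- Let p be an odd prime and (V, Q) a finite-dimensional nondegenerate quadratic space over ℚ_p. Let Λ ⊆ V be a vertex lattice of type 2 (pΛ ⊆ Λ^∨ ⊆ Λ, dim_{𝔽_p}(Λ/Λ^∨) = 2) such that every x ∈ Λ with Q(x) ∈ ℤ_p lies in Λ^∨. Let 𝔽 be an algebraically closed field of characteristic p, W₀ = W(𝔽), K₀ = Frac(W₀), σ the automorphism of K₀ induced by the Witt vector Frobenius, and let Φ = id_V ⊗ σ be the induced σ-semilinear bijection of V ⊗_{ℚ_p} K₀. Then there are exactly two self-dual W₀-lattices L with Λ^∨ ⊗_{ℤ_p} W₀ ⊆ L ⊆ Λ ⊗_{ℤ_p} W₀; the map Φ_* (W₀-span of the image under Φ) interchanges these two lattices, so that in particular Φ_*(L) ≠ L and Φ_*(Φ_*(L)) = L for each of them. -/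

import Mathlib

/-!
Statement 12: Let `p` be an odd prime and `(V, Q)` a finite-dimensional nondegenerate quadratic
space over `ℚ_p`.  Let `Λ ⊆ V` be a vertex lattice of type 2 such that every `x ∈ Λ` with
`Q x ∈ ℤ_p` lies in `Λ^∨`.  Let `𝔽` be an algebraically closed field of characteristic `p`,
`W₀ = W(𝔽)`, `K₀ = Frac W₀`, `σ` the automorphism of `K₀` induced by the Witt vector
Frobenius, and `Φ = id_V ⊗ σ` on `V ⊗_{ℚ_p} K₀`.  Then there are exactly two self-dual
`W₀`-lattices `L` with `Λ^∨ ⊗ W₀ ⊆ L ⊆ Λ ⊗ W₀`, and `Φ_*` interchanges them (so in particular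
`Φ_* L ≠ L` and `Φ_* (Φ_* L) = L` for each of them).
-/

open QuadraticMap

variable (p : ℕ) [Fact p.Prime]
variable {V : Type*} [AddCommGroup V] [Module ℚ_[p] V] [Module ℤ_[p] V]
  [IsScalarTower ℤ_[p] ℚ_[p] V]

/-- `L` is a `ℤ_p`-lattice in the `ℚ_p`-vector space `V`. -/
def IsZpLattice (L : Submodule ℤ_[p] V) : Prop :=
  L.FG ∧ Submodule.span ℚ_[p] (L : Set V) = ⊤

/-- The dual lattice `L^∨` with respect to the bilinear form associated to `Q`. -/
noncomputable def zpDual (Q : QuadraticForm ℚ_[p] V) (L : Submodule ℤ_[p] V) :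
    Submodule ℤ_[p] V :=
  LinearMap.BilinForm.dualSubmodule (QuadraticMap.polarBilin Q) L

/-- A saturated chain of `ℤ_p`-submodules of length `k` from `A` to `B`; for `A ≤ B` killed by
`p` this says `dim_{𝔽_p} (B/A) = k`. -/
def zpChainLength (A B : Submodule ℤ_[p] V) (k : ℕ) : Prop :=
  ∃ f : Fin (k + 1) → Submodule ℤ_[p] V,
    f 0 = A ∧ f (Fin.last k) = B ∧ ∀ i : Fin k, f i.castSucc ⋖ f i.succ

section BaseChange

variable (𝔽 : Type*) [Field 𝔽] [CharP 𝔽 p] [IsAlgClosed 𝔽]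
variable [Algebra ℚ_[p] (FractionRing (WittVector p 𝔽))]
variable [SMulCommClass ℚ_[p] (WittVector p 𝔽) (FractionRing (WittVector p 𝔽))]

/-- The dual lattice in `K₀ ⊗_{ℚ_p} V` with respect to the base-changed form. -/
noncomputable def wDual
    (QK : QuadraticForm (FractionRing (WittVector p 𝔽))
      (TensorProduct ℚ_[p] (FractionRing (WittVector p 𝔽)) V))
    (L : Submodule (WittVector p 𝔽) (TensorProduct ℚ_[p] (FractionRing (WittVector p 𝔽)) V)) :
    Submodule (WittVector p 𝔽) (TensorProduct ℚ_[p] (FractionRing (WittVector p 𝔽)) V) :=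
  LinearMap.BilinForm.dualSubmodule (QuadraticMap.polarBilin QK) L

/-- `Λ ⊗_{ℤ_p} W₀`, viewed inside `K₀ ⊗_{ℚ_p} V`: the `W₀`-span of the image of `Λ`. -/
noncomputable def baseChangeLattice (Λ : Submodule ℤ_[p] V) :
    Submodule (WittVector p 𝔽) (TensorProduct ℚ_[p] (FractionRing (WittVector p 𝔽)) V) :=
  Submodule.span (WittVector p 𝔽)
    ((fun v => (1 : FractionRing (WittVector p 𝔽)) ⊗ₜ[ℚ_[p]] v) '' (Λ : Set V))

/-- `Φ_* L`: the `W₀`-span of the image of `L` under `Φ`. -/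
noncomputable def phiStar
    (Φ : TensorProduct ℚ_[p] (FractionRing (WittVector p 𝔽)) V ≃+
      TensorProduct ℚ_[p] (FractionRing (WittVector p 𝔽)) V)
    (L : Submodule (WittVector p 𝔽) (TensorProduct ℚ_[p] (FractionRing (WittVector p 𝔽)) V)) :
    Submodule (WittVector p 𝔽) (TensorProduct ℚ_[p] (FractionRing (WittVector p 𝔽)) V) :=
  Submodule.span (WittVector p 𝔽)
    (⇑Φ '' (L : Set (TensorProduct ℚ_[p] (FractionRing (WittVector p 𝔽)) V)))

/-!
The form makes `Λ / Λ^∨`, after extension to the residue field, a nondegenerate plane whose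
isotropic lines are the self-dual lattices between `Λ^∨` and `Λ`. Diagonalizing by `e`, `v`, there
are two such lines, spanned by `v + u e` and `v - u e` with `u ^ 2 = - [v, v] / [e, e]`.
Anisotropy of the plane over `𝔽_p` means that the square root `u` does not lie in `𝔽_p`, so
Frobenius sends `u` to `-u` and swaps the two lines.
-/

namespace VertexLattice

open Submodule LinearMap.BilinForm

section Integrality

variable {R K : Type*} [CommRing R] [Field K] [Algebra R K]

theorem dvd_iff_not_isUnit [IsDomain R] [IsDiscreteValuationRing R] {π : R}
    (hπ : Irreducible π) {c : R} : π ∣ c ↔ ¬ IsUnit c := by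
  rw [← Ideal.mem_span_singleton, ← hπ.maximalIdeal_eq, IsLocalRing.mem_maximalIdeal,
    mem_nonunits_iff]

theorem smul_mem_one_of_dvd {π c : R} {x : K} (hx : π • x ∈ (1 : Submodule R K)) (hc : π ∣ c) :
    c • x ∈ (1 : Submodule R K) := by
  obtain ⟨d, rfl⟩ := hc
  rw [mul_comm, mul_smul]
  exact smul_mem _ d hx

theorem exists_isUnit_algebraMap_eq_smul [IsDomain R] [IsDiscreteValuationRing R]
    [IsFractionRing R K] {π : R} (hπ : Irreducible π) {x : K}
    (hx : x ∉ (1 : Submodule R K)) (hπx : π • x ∈ (1 : Submodule R K)) :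
    ∃ a : R, IsUnit a ∧ algebraMap R K a = π • x := by
  obtain ⟨a, ha⟩ := mem_one.1 hπx
  refine ⟨a, ?_, ha⟩
  by_contra hunit
  obtain ⟨c, rfl⟩ := (dvd_iff_not_isUnit hπ).2 hunit
  have hπ0 : algebraMap R K π ≠ 0 := IsFractionRing.to_map_ne_zero_of_mem_nonZeroDivisors
    (mem_nonZeroDivisors_of_ne_zero hπ.ne_zero)
  refine hx (mem_one.2 ⟨c, mul_left_cancel₀ hπ0 ?_⟩)
  rw [← map_mul, ha, Algebra.smul_def]

theorem exists_smul_eq_of_notMem_one [IsDomain R] [IsDiscreteValuationRing R]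
    [IsFractionRing R K] {π : R} (hπ : Irreducible π) {x y : K}
    (hx : x ∉ (1 : Submodule R K)) (hπx : π • x ∈ (1 : Submodule R K))
    (hπy : π • y ∈ (1 : Submodule R K)) : ∃ c : R, c • x = y := by
  obtain ⟨a, ha, hax⟩ := exists_isUnit_algebraMap_eq_smul hπ hx hπx
  obtain ⟨a', ha'⟩ := ha.exists_left_inv
  obtain ⟨b, hb⟩ := mem_one.1 hπy
  refine ⟨b * a', smul_right_injective K hπ.ne_zero ?_⟩
  calc π • (b * a') • x = (b * a') • π • x := smul_comm _ _ _
    _ = algebraMap R K (b * (a' * a)) := by rw [← hax, Algebra.smul_def, ← map_mul, mul_assoc]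
    _ = π • y := by rw [ha', mul_one, hb]

theorem algebraMap_mem_one_iff {S L : Type*} [CommRing S] [Field L] [Algebra S L]
    [FaithfulSMul S L] [Algebra R S] [Algebra K L] [Algebra R L] [IsScalarTower R S L]
    [IsScalarTower R K L] [IsDomain R] [ValuationRing R] [IsFractionRing R K]
    [IsLocalHom (algebraMap R S)] {x : K} :
    algebraMap K L x ∈ (1 : Submodule S L) ↔ x ∈ (1 : Submodule R K) := by
  constructor
  · intro hx
    obtain ⟨s, hs⟩ := mem_one.1 hx
    obtain ⟨r, hr⟩ | ⟨r, hr⟩ := ValuationRing.isInteger_or_isInteger R x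
    · exact mem_one.2 ⟨r, hr⟩
    rcases eq_or_ne x 0 with rfl | hx0
    · exact zero_mem _
    have hrs : algebraMap R S r * s = 1 := by
      apply FaithfulSMul.algebraMap_injective S L
      rw [map_mul, hs, ← IsScalarTower.algebraMap_apply R S L, IsScalarTower.algebraMap_apply R K L,
        hr, ← map_mul, inv_mul_cancel₀ hx0, map_one, map_one]
    have hr_unit : IsUnit r := isUnit_of_map_unit (algebraMap R S) r (.of_mul_eq_one s hrs)
    obtain ⟨r', hr'⟩ := hr_unit.exists_left_inv
    refine mem_one.2 ⟨r', ?_⟩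
    rw [← mul_one (algebraMap R K r'), ← inv_mul_cancel₀ hx0, ← hr, ← mul_assoc, ← map_mul, hr',
      map_one, one_mul]
  · intro hx
    obtain ⟨r, rfl⟩ := mem_one.1 hx
    refine mem_one.2 ⟨algebraMap R S r, ?_⟩
    rw [← IsScalarTower.algebraMap_apply R S L, IsScalarTower.algebraMap_apply R K L]

theorem isLocalHom_algebraMap_of_irreducible {S : Type*} [CommRing S] [Algebra R S] [IsDomain R]
    [IsDiscreteValuationRing R] {π : R} (hπ : Irreducible π)
    (hπS : Irreducible (algebraMap R S π)) : IsLocalHom (algebraMap R S) where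
  map_nonunit r hr := by
    by_contra hr'
    have hdvd : algebraMap R S π ∣ algebraMap R S r :=
      map_dvd _ ((dvd_iff_not_isUnit hπ).2 hr')
    exact hπS.not_isUnit (isUnit_of_dvd_unit hdvd hr)

end Integrality

section Dual

variable {R K T : Type*} [CommRing R] [Field K] [Algebra R K] [AddCommGroup T] [Module R T]
  [Module K T] [IsScalarTower R K T] {B : LinearMap.BilinForm K T}

theorem dualSubmodule_anti {M N : Submodule R T} (h : M ≤ N) :
    B.dualSubmodule N ≤ B.dualSubmodule M :=
  fun _ hx y hy => hx y (h hy)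

theorem eq_of_le_of_dualSubmodule_eq {M N : Submodule R T} (h : M ≤ N)
    (hM : B.dualSubmodule M = M) (hN : B.dualSubmodule N = N) : M = N :=
  h.antisymm (hN ▸ hM ▸ dualSubmodule_anti h)

theorem sup_span_singleton_eq_of_covBy {A C : Submodule R T} (h : A ⋖ C) {e : T} (heC : e ∈ C)
    (heA : e ∉ A) : A ⊔ span R {e} = C := by
  refine (h.eq_or_eq le_sup_left (sup_le h.le ((span_singleton_le_iff_mem _ _).2 heC))).resolve_left
    fun hA => heA ?_
  rw [← hA]
  exact mem_sup_right (mem_span_singleton_self e)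

theorem sup_span_singleton_congr {A : Submodule R T} {x y : T} (h : x - y ∈ A) :
    A ⊔ span R {x} = A ⊔ span R {y} := by
  have key {x y : T} (h : x - y ∈ A) : A ⊔ span R {x} ≤ A ⊔ span R {y} := by
    refine sup_le le_sup_left ((span_singleton_le_iff_mem _ _).2 ?_)
    rw [← sub_add_cancel x y]
    exact add_mem (mem_sup_left h) (mem_sup_right (mem_span_singleton_self y))
  exact (key h).antisymm (key (by rwa [← neg_sub, neg_mem_iff]))

theorem exists_eq_add_smul_add_smul {A M : Submodule R T} {x y : T} (h : A ⊔ span R {x, y} = M)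
    {z : T} (hz : z ∈ M) : ∃ d ∈ A, ∃ s t : R, z = d + (s • x + t • y) := by
  obtain ⟨d, hd, w, hw, rfl⟩ := mem_sup.1 (h ▸ hz)
  obtain ⟨s, t, rfl⟩ := mem_span_pair.1 hw
  exact ⟨d, hd, s, t, rfl⟩

/-- A vertex lattice with respect to the uniformizer `π`: a submodule `M` with
`π M ⊆ M^∨ ⊆ M`. Finiteness and reflexivity of `M` are not part of the definition. -/
structure IsVertexLattice (B : LinearMap.BilinForm K T) (π : R) (M : Submodule R T) : Prop where
  dual_le : B.dualSubmodule M ≤ M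
  smul_mem_dual : ∀ x ∈ M, π • x ∈ B.dualSubmodule M

namespace IsVertexLattice

variable {π : R} {M : Submodule R T}

theorem smul_mem_dual_of_dvd (hM : IsVertexLattice B π M) {c : R} (hc : π ∣ c) {x : T}
    (hx : x ∈ M) : c • x ∈ B.dualSubmodule M := by
  obtain ⟨d, rfl⟩ := hc
  rw [mul_smul]
  exact hM.smul_mem_dual _ (smul_mem _ d hx)

theorem smul_apply_mem_one (hM : IsVertexLattice B π M) {x y : T} (hx : x ∈ M) (hy : y ∈ M) :
    π • B x y ∈ (1 : Submodule R K) := by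
  simpa only [LinearMap.map_smul_of_tower, LinearMap.smul_apply]
    using hM.smul_mem_dual x hx y hy

end IsVertexLattice

/-- Generators `x`, `y` of `M` modulo `M^∨` spanning a hyperbolic plane: both are isotropic modulo
integers, and their pairing is not integral. -/
structure IsHyperbolicPair (B : LinearMap.BilinForm K T) (M : Submodule R T) (x y : T) :
    Prop where
  sup_span : B.dualSubmodule M ⊔ span R {x, y} = M
  left_isotropic : B x x ∈ (1 : Submodule R K)
  right_isotropic : B y y ∈ (1 : Submodule R K)
  apply_notMem : B x y ∉ (1 : Submodule R K)

namespace IsHyperbolicPair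

variable {π : R} {M : Submodule R T} {x y : T}

theorem left_mem (h : IsHyperbolicPair B M x y) : x ∈ M :=
  h.sup_span ▸ mem_sup_right (subset_span (Set.mem_insert x _))

theorem symm (h : IsHyperbolicPair B M x y) (hB : B.IsSymm) : IsHyperbolicPair B M y x where
  sup_span := by rw [Set.pair_comm, h.sup_span]
  left_isotropic := h.right_isotropic
  right_isotropic := h.left_isotropic
  apply_notMem := by rw [← hB.eq x y]; exact h.apply_notMem

theorem right_mem (h : IsHyperbolicPair B M x y) : y ∈ M :=
  h.sup_span ▸ mem_sup_right (subset_span (Set.mem_insert_of_mem x rfl))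

theorem sup_span_left_le (h : IsHyperbolicPair B M x y) (hM : IsVertexLattice B π M) :
    B.dualSubmodule M ⊔ span R {x} ≤ M :=
  sup_le hM.dual_le ((span_singleton_le_iff_mem _ _).2 h.left_mem)

theorem le_dualSubmodule_sup_span_left (h : IsHyperbolicPair B M x y) (hB : B.IsSymm)
    (hM : IsVertexLattice B π M) :
    B.dualSubmodule M ⊔ span R {x} ≤ B.dualSubmodule (B.dualSubmodule M ⊔ span R {x}) := by
  refine sup_le (dualSubmodule_anti (h.sup_span_left_le hM))
    ((span_singleton_le_iff_mem _ _).2 fun z hz => ?_)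
  obtain ⟨d, hd, w, hw, rfl⟩ := mem_sup.1 hz
  obtain ⟨s, rfl⟩ := mem_span_singleton.1 hw
  have hxd : B x d ∈ (1 : Submodule R K) := by
    simpa only [hB.eq d x] using hd x h.left_mem
  rw [map_add, LinearMap.map_smul_of_tower]
  exact add_mem hxd (smul_mem _ s h.left_isotropic)

theorem sup_span_left_ne_sup_span_right (h : IsHyperbolicPair B M x y) (hB : B.IsSymm)
    (hM : IsVertexLattice B π M) :
    B.dualSubmodule M ⊔ span R {x} ≠ B.dualSubmodule M ⊔ span R {y} := by
  intro heq
  have hx : x ∈ B.dualSubmodule M ⊔ span R {x} := mem_sup_right (mem_span_singleton_self x)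
  have hy : y ∈ B.dualSubmodule M ⊔ span R {x} :=
    heq ▸ mem_sup_right (mem_span_singleton_self y)
  exact h.apply_notMem (h.le_dualSubmodule_sup_span_left hB hM hx y hy)

variable [IsDomain R] [IsDiscreteValuationRing R]

theorem dvd_of_smul_apply_mem (h : IsHyperbolicPair B M x y) (hπ : Irreducible π) {c : R}
    (hc : c • B x y ∈ (1 : Submodule R K)) : π ∣ c :=
  (dvd_iff_not_isUnit hπ).2 fun hunit =>
    h.apply_notMem ((smul_mem_iff_of_isUnit _ hunit).1 hc)

theorem dualSubmodule_sup_span_left_le (h : IsHyperbolicPair B M x y) (hB : B.IsSymm)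
    (hM : IsVertexLattice B π M) (hrefl : B.dualSubmodule (B.dualSubmodule M) = M)
    (hπ : Irreducible π) :
    B.dualSubmodule (B.dualSubmodule M ⊔ span R {x}) ≤ B.dualSubmodule M ⊔ span R {x} := by
  intro z hz
  have hzM : z ∈ M := hrefl ▸ dualSubmodule_anti le_sup_left hz
  obtain ⟨d, hd, s, t, rfl⟩ := exists_eq_add_smul_add_smul h.sup_span hzM
  have hzx := hz x (mem_sup_right (mem_span_singleton_self x))
  have hexpand : B (d + (s • x + t • y)) x = B d x + s • B x x + t • B x y := by
    simp only [map_add, LinearMap.add_apply, LinearMap.map_smul_of_tower, LinearMap.smul_apply,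
      ← hB.eq x y, add_assoc]
  have hty : t • B x y ∈ (1 : Submodule R K) :=
    (add_mem_cancel_left (add_mem (hd x h.left_mem) (smul_mem _ s h.left_isotropic))).1
      (hexpand ▸ hzx)
  have htyD := hM.smul_mem_dual_of_dvd (h.dvd_of_smul_apply_mem hπ hty) h.right_mem
  rw [add_comm (s • x), ← add_assoc]
  exact add_mem (mem_sup_left (add_mem hd htyD))
    (mem_sup_right (smul_mem _ s (mem_span_singleton_self x)))

theorem dualSubmodule_sup_span_left (h : IsHyperbolicPair B M x y) (hB : B.IsSymm)
    (hM : IsVertexLattice B π M) (hrefl : B.dualSubmodule (B.dualSubmodule M) = M)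
    (hπ : Irreducible π) :
    B.dualSubmodule (B.dualSubmodule M ⊔ span R {x}) = B.dualSubmodule M ⊔ span R {x} :=
  (h.dualSubmodule_sup_span_left_le hB hM hrefl hπ).antisymm
    (h.le_dualSubmodule_sup_span_left hB hM)

theorem eq_sup_span_left_of_smul_mem (h : IsHyperbolicPair B M x y) (hB : B.IsSymm)
    (hM : IsVertexLattice B π M) (hrefl : B.dualSubmodule (B.dualSubmodule M) = M)
    (hπ : Irreducible π) {N : Submodule R T} (hN : B.dualSubmodule N = N)
    (hDN : B.dualSubmodule M ≤ N) {s t : R} (hmem : s • x + t • y ∈ N)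
    (hnotMem : s • x + t • y ∉ B.dualSubmodule M) (ht : π ∣ t) :
    N = B.dualSubmodule M ⊔ span R {x} := by
  have htyD := hM.smul_mem_dual_of_dvd ht h.right_mem
  have hsx : s • x ∈ N := (add_mem_cancel_right (hDN htyD)).1 hmem
  have hs : IsUnit s := not_not.1 fun hs => hnotMem
    (add_mem (hM.smul_mem_dual_of_dvd ((dvd_iff_not_isUnit hπ).2 hs) h.left_mem) htyD)
  have hle : B.dualSubmodule M ⊔ span R {x} ≤ N :=
    sup_le hDN ((span_singleton_le_iff_mem _ _).2 ((smul_mem_iff_of_isUnit _ hs).1 hsx))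
  exact (eq_of_le_of_dualSubmodule_eq hle
    (h.dualSubmodule_sup_span_left hB hM hrefl hπ) hN).symm

theorem dvd_or_dvd_of_isotropic (h : IsHyperbolicPair B M x y) (hB : B.IsSymm)
    (hπ : Irreducible π) (h2 : IsUnit (2 : R)) {s t : R}
    (hst : B (s • x + t • y) (s • x + t • y) ∈ (1 : Submodule R K)) : π ∣ s ∨ π ∣ t := by
  have hexpand : B (s • x + t • y) (s • x + t • y) =
      (s ^ 2) • B x x + (t ^ 2) • B y y + (2 * (s * t)) • B x y := by
    simp only [map_add, LinearMap.add_apply, LinearMap.map_smul_of_tower, LinearMap.smul_apply,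
      ← hB.eq x y]
    module
  have hxy : (2 * (s * t)) • B x y ∈ (1 : Submodule R K) :=
    (add_mem_cancel_left (add_mem (smul_mem _ (s ^ 2) h.left_isotropic)
      (smul_mem _ (t ^ 2) h.right_isotropic))).1 (hexpand ▸ hst)
  rw [mul_smul, smul_mem_iff_of_isUnit _ h2] at hxy
  exact hπ.prime.dvd_or_dvd (h.dvd_of_smul_apply_mem hπ hxy)

theorem selfDual_iff (h : IsHyperbolicPair B M x y) (hB : B.IsSymm)
    (hM : IsVertexLattice B π M) (hrefl : B.dualSubmodule (B.dualSubmodule M) = M)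
    (hπ : Irreducible π) (h2 : IsUnit (2 : R)) (N : Submodule R T) :
    (B.dualSubmodule N = N ∧ B.dualSubmodule M ≤ N ∧ N ≤ M) ↔
      N = B.dualSubmodule M ⊔ span R {x} ∨ N = B.dualSubmodule M ⊔ span R {y} := by
  constructor
  · rintro ⟨hN, hDN, hNM⟩
    have hND : ¬ N ≤ B.dualSubmodule M := fun hle => by
      obtain rfl : N = B.dualSubmodule M := hle.antisymm hDN
      have hx : x ∈ B.dualSubmodule M := by
        rw [← hN, hrefl]
        exact h.left_mem
      exact h.apply_notMem (hx y h.right_mem)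
    obtain ⟨z, hzN, hzD⟩ := SetLike.not_le_iff_exists.1 hND
    obtain ⟨d, hd, s, t, rfl⟩ := exists_eq_add_smul_add_smul h.sup_span (hNM hzN)
    have hmem : s • x + t • y ∈ N := (add_mem_cancel_left (hDN hd)).1 hzN
    have hnotMem : s • x + t • y ∉ B.dualSubmodule M := fun hw => hzD (add_mem hd hw)
    have hiso : B (s • x + t • y) (s • x + t • y) ∈ (1 : Submodule R K) :=
      (hN.symm ▸ hmem : s • x + t • y ∈ B.dualSubmodule N) _ hmem
    rcases h.dvd_or_dvd_of_isotropic hB hπ h2 hiso with hs | ht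
    · rw [add_comm] at hmem hnotMem
      exact .inr ((h.symm hB).eq_sup_span_left_of_smul_mem hB hM hrefl hπ hN hDN hmem hnotMem hs)
    · exact .inl (h.eq_sup_span_left_of_smul_mem hB hM hrefl hπ hN hDN hmem hnotMem ht)
  · rintro (rfl | rfl)
    · exact ⟨h.dualSubmodule_sup_span_left hB hM hrefl hπ, le_sup_left, h.sup_span_left_le hM⟩
    · exact ⟨(h.symm hB).dualSubmodule_sup_span_left hB hM hrefl hπ, le_sup_left,
        (h.symm hB).sup_span_left_le hM⟩

end IsHyperbolicPair

/-- Generators `e`, `f` of `M` modulo `M^∨` diagonalizing `B`, with the value at `e` not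
integral. -/
structure IsOrthogonalFrame (B : LinearMap.BilinForm K T) (M : Submodule R T) (e f : T) :
    Prop where
  sup_span : B.dualSubmodule M ⊔ span R {e, f} = M
  apply_eq_zero : B e f = 0
  apply_self_notMem : B e e ∉ (1 : Submodule R K)

namespace IsOrthogonalFrame

variable {M : Submodule R T} {e f : T}

theorem left_mem (h : IsOrthogonalFrame B M e f) : e ∈ M :=
  h.sup_span ▸ mem_sup_right (subset_span (Set.mem_insert e _))

theorem right_mem (h : IsOrthogonalFrame B M e f) : f ∈ M :=
  h.sup_span ▸ mem_sup_right (subset_span (Set.mem_insert_of_mem e rfl))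

theorem apply_add_smul_self (h : IsOrthogonalFrame B M e f) (hB : B.IsSymm) (s : R) :
    B (f + s • e) (f + s • e) = B f f + s ^ 2 • B e e := by
  simp only [map_add, LinearMap.add_apply, LinearMap.map_smul_of_tower, LinearMap.smul_apply,
    h.apply_eq_zero, (hB.eq e f).symm.trans h.apply_eq_zero]
  module

theorem apply_add_smul_sub_smul (h : IsOrthogonalFrame B M e f) (hB : B.IsSymm) (s : R) :
    B (f + s • e) (f - s • e) = B f f - s ^ 2 • B e e := by
  simp only [map_add, map_sub, LinearMap.add_apply, LinearMap.map_smul_of_tower,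
    LinearMap.smul_apply, h.apply_eq_zero, (hB.eq e f).symm.trans h.apply_eq_zero]
  module

theorem isHyperbolicPair (h : IsOrthogonalFrame B M e f) (hB : B.IsSymm)
    (h2 : IsUnit (2 : R)) {u : R} (hu : IsUnit u)
    (hiso : B f f + u ^ 2 • B e e ∈ (1 : Submodule R K)) :
    IsHyperbolicPair B M (f + u • e) (f - u • e) where
  sup_span := by
    suffices hspan : span R {f + u • e, f - u • e} = span R {e, f} by rw [hspan, h.sup_span]
    refine le_antisymm (span_le.2 ?_) (span_le.2 ?_)
    · rintro _ (rfl | rfl)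
      · exact mem_span_pair.2 ⟨u, 1, by module⟩
      · exact mem_span_pair.2 ⟨-u, 1, by module⟩
    · rintro _ (rfl | rfl)
      · refine (smul_mem_iff_of_isUnit _ (h2.mul hu)).1 (mem_span_pair.2 ⟨1, -1, by module⟩)
      · refine (smul_mem_iff_of_isUnit _ h2).1 (mem_span_pair.2 ⟨1, 1, by module⟩)
  left_isotropic := by rwa [h.apply_add_smul_self hB]
  right_isotropic := by
    rw [sub_eq_add_neg, ← neg_smul, h.apply_add_smul_self hB, neg_sq]
    exact hiso
  apply_notMem hxy := by
    rw [h.apply_add_smul_sub_smul hB] at hxy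
    refine h.apply_self_notMem ((smul_mem_iff_of_isUnit _ (h2.mul (hu.pow 2))).1 ?_)
    convert sub_mem hiso hxy using 1
    module

end IsOrthogonalFrame

theorem IsVertexLattice.exists_isOrthogonalFrame [IsDomain R] [IsDiscreteValuationRing R]
    [IsFractionRing R K] {π : R} {M N : Submodule R T} (hM : IsVertexLattice B π M)
    (hπ : Irreducible π)
    (haniso : ∀ x ∈ M, B x x ∈ (1 : Submodule R K) → x ∈ B.dualSubmodule M)
    (hDN : B.dualSubmodule M ⋖ N) (hNM : N ⋖ M) :
    ∃ e f, IsOrthogonalFrame B M e f ∧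
      ∀ s : R, B (f + s • e) (f + s • e) ∉ (1 : Submodule R K) := by
  obtain ⟨e, heN, heD⟩ := SetLike.exists_of_lt hDN.lt
  obtain ⟨g, hgM, hgN⟩ := SetLike.exists_of_lt hNM.lt
  have heM : e ∈ M := hNM.le heN
  have hee : B e e ∉ (1 : Submodule R K) := fun hint => heD (haniso e heM hint)
  obtain ⟨c, hc⟩ := exists_smul_eq_of_notMem_one hπ hee (hM.smul_apply_mem_one heM heM)
    (hM.smul_apply_mem_one heM hgM)
  have hfN (s : R) : g - c • e + s • e ∉ N := fun hf => hgN <| by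
    rwa [sub_add, sub_mem_iff_left _ (sub_mem (smul_mem _ c heN) (smul_mem _ s heN))] at hf
  have hfM (s : R) : g - c • e + s • e ∈ M :=
    add_mem (sub_mem hgM (smul_mem _ c heM)) (smul_mem _ s heM)
  refine ⟨e, g - c • e, ⟨?_, ?_, hee⟩, fun s hint => hfN s (hDN.le (haniso _ (hfM s) hint))⟩
  · rw [span_insert, ← sup_assoc, sup_span_singleton_eq_of_covBy hDN heN heD,
      sup_span_singleton_eq_of_covBy hNM (by simpa using hfM 0) (by simpa using hfN 0)]
  · rw [map_sub, LinearMap.map_smul_of_tower, hc, sub_self]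

end Dual

section Extension

variable {R K S L U T : Type*} [CommRing R] [Field K] [Algebra R K] [CommRing S] [Algebra R S]
  [Field L] [Algebra S L] [Algebra K L] [AddCommGroup U] [Module R U] [Module K U]
  [IsScalarTower R K U] [AddCommGroup T] [Module R T] [Module K T] [Module S T] [Module L T]
  [IsScalarTower R K T] [IsScalarTower R S T] [IsScalarTower K L T] [IsScalarTower S L T]
  {f : U →ₗ[K] T}

variable (S) in
/-- The lattice `M ⊗_R S`, realized as the `S`-span of the image of `M` under the comparison map
`f : U → T` from a `K`-space to its scalar extension to `L`. -/
def extendLattice (f : U →ₗ[K] T) (M : Submodule R U) : Submodule S T :=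
  span S (f '' M)

theorem extendLattice_span (f : U →ₗ[K] T) (s : Set U) :
    extendLattice S f (span R s) = span S (f '' s) := by
  have himage : f '' span R s = (span R (f '' s) : Set T) :=
    congrArg SetLike.coe (map_span (f.restrictScalars R) s)
  rw [extendLattice, himage, span_span_of_tower]

theorem extendLattice_sup_span (f : U →ₗ[K] T) (M : Submodule R U) (s : Set U) :
    extendLattice S f (M ⊔ span R s) = extendLattice S f M ⊔ span S (f '' s) := by
  rw [← span_eq M, ← span_union, extendLattice_span, extendLattice_span,
    Set.image_union, span_union]

theorem exists_basis_span_range_eq [IsDomain R] [IsPrincipalIdealRing R] [IsFractionRing R K]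
    (M : Submodule R U) [IsLattice K M] :
    ∃ (n : ℕ) (b : Module.Basis (Fin n) K U), span R (Set.range b) = M := by
  have : Module.Finite R M := .of_fg IsLattice.fg
  have : Module.Free R M := IsLattice.free K M
  let b := Module.finBasis R M
  refine ⟨_, b.extendOfIsLattice K, ?_⟩
  have hrange : Set.range (b.extendOfIsLattice K) = M.subtype '' Set.range b := by
    rw [← Set.range_comp]
    exact congrArg Set.range (funext (b.extendOfIsLattice_apply K))
  rw [hrange, span_image, b.span_eq, map_subtype_top]

variable {B : LinearMap.BilinForm K U} {B' : LinearMap.BilinForm L T}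

theorem nondegenerate_of_isBaseChange [FiniteDimensional K U] (hf : IsBaseChange L f)
    (hBB' : ∀ x y, B' (f x) (f y) = algebraMap K L (B x y)) (hB : B.Nondegenerate) :
    B'.Nondegenerate := by
  let b := Module.finBasis K U
  have hmatrix : toMatrix (hf.basis b) B' = (algebraMap K L).mapMatrix (toMatrix b B) := by
    ext i j
    simp only [toMatrix_apply, IsBaseChange.basis_apply, hBB', RingHom.mapMatrix_apply,
      Matrix.map_apply]
  rw [nondegenerate_iff_det_ne_zero (hf.basis b), hmatrix, ← RingHom.map_det]
  exact (map_ne_zero _).2 ((nondegenerate_iff_det_ne_zero b).1 hB)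

variable [IsDomain R] [IsPrincipalIdealRing R] [IsFractionRing R K] {M : Submodule R U}
  [IsLattice K M]

theorem extendLattice_dualSubmodule (hf : IsBaseChange L f)
    (hBB' : ∀ x y, B' (f x) (f y) = algebraMap K L (B x y)) (hB : B.Nondegenerate) :
    extendLattice S f (B.dualSubmodule M) = B'.dualSubmodule (extendLattice S f M) := by
  obtain ⟨n, b, rfl⟩ := exists_basis_span_range_eq (K := K) M
  have : FiniteDimensional K U := .of_basis b
  have hB' := nondegenerate_of_isBaseChange hf hBB' hB
  have hbasis : f ∘ b = hf.basis b := funext fun i => (hf.basis_apply b i).symm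
  have hdual : B'.dualBasis hB' (hf.basis b) = f ∘ B.dualBasis hB b := by
    refine (dualBasis_eq_iff hB' _ _).2 fun i j => ?_
    rw [Function.comp_apply, IsBaseChange.basis_apply, hBB', apply_dualBasis_left,
      apply_ite (algebraMap K L), map_one, map_zero]
  rw [dualSubmodule_span_of_basis B hB, extendLattice_span, extendLattice_span,
    ← Set.range_comp, ← Set.range_comp, hbasis, dualSubmodule_span_of_basis B' hB', hdual]

theorem dualSubmodule_dualSubmodule_extendLattice (hf : IsBaseChange L f)
    (hBB' : ∀ x y, B' (f x) (f y) = algebraMap K L (B x y)) (hB : B.Nondegenerate)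
    (hsymm : B'.IsSymm) :
    B'.dualSubmodule (B'.dualSubmodule (extendLattice S f M)) = extendLattice S f M := by
  obtain ⟨n, b, rfl⟩ := exists_basis_span_range_eq (K := K) M
  have : FiniteDimensional K U := .of_basis b
  have hbasis : f ∘ b = hf.basis b := funext fun i => (hf.basis_apply b i).symm
  rw [extendLattice_span, ← Set.range_comp, hbasis,
    dualSubmodule_dualSubmodule_of_basis B' (nondegenerate_of_isBaseChange hf hBB' hB) hsymm]

theorem IsVertexLattice.extend {π : R} (hM : IsVertexLattice B π M)
    (hf : IsBaseChange L f) (hBB' : ∀ x y, B' (f x) (f y) = algebraMap K L (B x y))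
    (hB : B.Nondegenerate) :
    IsVertexLattice B' (algebraMap R S π) (extendLattice S f M) where
  dual_le := by
    rw [← extendLattice_dualSubmodule hf hBB' hB]
    exact span_mono (Set.image_mono hM.dual_le)
  smul_mem_dual x hx := by
    rw [← extendLattice_dualSubmodule hf hBB' hB]
    induction hx using span_induction with
    | mem x hx =>
      obtain ⟨v, hv, rfl⟩ := hx
      rw [algebraMap_smul, ← LinearMap.map_smul_of_tower]
      exact subset_span (Set.mem_image_of_mem f (hM.smul_mem_dual v hv))
    | zero => simp only [smul_zero, zero_mem]
    | add x y _ _ hx hy =>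
      rw [smul_add]
      exact add_mem hx hy
    | smul s x _ hx =>
      rw [smul_comm]
      exact smul_mem _ s hx

theorem IsOrthogonalFrame.extend [ValuationRing R] [Algebra R L] [IsScalarTower R S L]
    [IsScalarTower R K L] [FaithfulSMul S L] [IsLocalHom (algebraMap R S)] {e v : U}
    (h : IsOrthogonalFrame B M e v) (hf : IsBaseChange L f)
    (hBB' : ∀ x y, B' (f x) (f y) = algebraMap K L (B x y)) (hB : B.Nondegenerate) :
    IsOrthogonalFrame B' (extendLattice S f M) (f e) (f v) where
  sup_span := by
    rw [← extendLattice_dualSubmodule hf hBB' hB, ← Set.image_pair,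
      ← extendLattice_sup_span, h.sup_span]
  apply_eq_zero := by rw [hBB', h.apply_eq_zero, map_zero]
  apply_self_notMem := by
    rw [hBB', algebraMap_mem_one_iff (R := R)]
    exact h.apply_self_notMem

end Extension

section Frobenius

section Map

variable {S T : Type*} [CommRing S] {σ : S →+* S} [RingHomSurjective σ] [AddCommGroup T]
  [Module S T] {Φ : T →ₛₗ[σ] T}

theorem map_sup_span_add_smul {D : Submodule S T} {x y : T} {w : S} (hD : D.map Φ = D)
    (hx : Φ x = x) (hy : Φ y = y) (hw : (σ w + w) • x ∈ D) :
    (D ⊔ span S {y + w • x}).map Φ = D ⊔ span S {y - w • x} := by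
  rw [Submodule.map_sup, hD, map_span, Set.image_singleton, map_add, map_smulₛₗ, hx, hy]
  refine sup_span_singleton_congr ?_
  convert hw using 1
  module

theorem map_extendLattice {R K U : Type*} [CommRing R] [Field K] [AddCommGroup U] [Module R U]
    [Module K U] [Module K T] {f : U →ₗ[K] T} (hΦ : ∀ x, Φ (f x) = f x) (M : Submodule R U) :
    (extendLattice S f M).map Φ = extendLattice S f M := by
  simp only [extendLattice, map_span, Set.image_image, hΦ]

end Map

variable {R S : Type*} [CommRing R] [CommRing S] [Algebra R S] {π : R} {σ : S →+* S}

theorem dvd_map_add_self_of_dvd_sq_sub (hprime : Prime (algebraMap R S π))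
    (hσ : ∀ x : S, algebraMap R S π ∣ σ x - x ↔ ∃ r : R, algebraMap R S π ∣ x - algebraMap R S r)
    {u : S} {r : R} (hu : algebraMap R S π ∣ u ^ 2 - algebraMap R S r)
    (hnotMem : ∀ s : R, ¬ algebraMap R S π ∣ u - algebraMap R S s) :
    algebraMap R S π ∣ σ u + u := by
  have hfixed (c : R) : algebraMap R S π ∣ σ (algebraMap R S c) - algebraMap R S c :=
    (hσ _).2 ⟨c, by rw [sub_self]; exact dvd_zero _⟩
  have hπ_dvd : algebraMap R S π ∣ σ (algebraMap R S π) := (dvd_sub_self_right).1 (hfixed π)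
  have hσu : algebraMap R S π ∣ σ u ^ 2 - σ (algebraMap R S r) := by
    simpa only [map_sub, map_pow] using hπ_dvd.trans (map_dvd σ hu)
  have hfactor : algebraMap R S π ∣ (σ u - u) * (σ u + u) := by
    convert dvd_sub (dvd_add hσu (hfixed r)) hu using 1
    ring
  refine (hprime.dvd_or_dvd hfactor).resolve_left fun hdvd => ?_
  obtain ⟨s, hs⟩ := (hσ u).1 hdvd
  exact hnotMem s hs

theorem dvd_of_algebraMap_dvd_algebraMap [IsDomain R] [IsDiscreteValuationRing R]
    (hπ : Irreducible π) (hπS : Irreducible (algebraMap R S π)) {c : R}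
    (hc : algebraMap R S π ∣ algebraMap R S c) : π ∣ c :=
  (dvd_iff_not_isUnit hπ).2 fun hunit =>
    hπS.not_isUnit (isUnit_of_dvd_unit hc (hunit.map (algebraMap R S)))

variable {K U : Type*} [Field K] [Algebra R K] [AddCommGroup U] [Module R U] [Module K U]
  [IsScalarTower R K U] {B : LinearMap.BilinForm K U} {M : Submodule R U}

theorem IsOrthogonalFrame.exists_dvd_sq_sub_of_anisotropic [IsDomain R]
    [IsDiscreteValuationRing R] [IsFractionRing R K] {e v : U} (h : IsOrthogonalFrame B M e v)
    (hsymm : B.IsSymm) (hM : IsVertexLattice B π M) (hπ : Irreducible π)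
    (hπS : Irreducible (algebraMap R S π))
    (hsqrt : ∀ r : R, ∃ u : S, algebraMap R S π ∣ u ^ 2 - algebraMap R S r)
    (haniso : ∀ s : R, B (v + s • e) (v + s • e) ∉ (1 : Submodule R K)) :
    ∃ (r : R) (u : S), r • B e e = -B v v ∧ algebraMap R S π ∣ u ^ 2 - algebraMap R S r ∧
      ∀ s : R, ¬ algebraMap R S π ∣ u - algebraMap R S s := by
  have hee := hM.smul_apply_mem_one h.left_mem h.left_mem
  obtain ⟨c, hc⟩ := exists_smul_eq_of_notMem_one hπ h.apply_self_notMem hee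
    (hM.smul_apply_mem_one h.right_mem h.right_mem)
  obtain ⟨u, hu⟩ := hsqrt (-c)
  refine ⟨-c, u, by rw [neg_smul, hc], hu, fun s hs => haniso s ?_⟩
  have hdvd : π ∣ s ^ 2 + c := by
    refine dvd_of_algebraMap_dvd_algebraMap hπ hπS ?_
    convert dvd_sub hu (hs.mul_right (u + algebraMap R S s)) using 1
    simp only [map_add, map_neg, map_pow]
    ring
  rw [h.apply_add_smul_self hsymm, ← hc, ← add_smul, add_comm]
  exact smul_mem_one_of_dvd hee hdvd

variable {L T : Type*} [Field L] [Algebra S L] [Algebra K L] [Algebra R L] [IsScalarTower R S L]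
  [IsScalarTower R K L] [AddCommGroup T] [Module R T] [Module K T] [Module S T] [Module L T]
  [IsScalarTower R K T] [IsScalarTower R S T] [IsScalarTower K L T] [IsScalarTower S L T]
  [IsDomain R] [IsDiscreteValuationRing R] [IsFractionRing R K] [IsDomain S]
  [IsDiscreteValuationRing S] [FaithfulSMul S L] [IsLattice K M] {B' : LinearMap.BilinForm L T}
  {f : U →ₗ[K] T} {N : Submodule R U}

theorem IsVertexLattice.exists_isHyperbolicPair_extendLattice (hM : IsVertexLattice B π M)
    (hf : IsBaseChange L f) (hBB' : ∀ x y, B' (f x) (f y) = algebraMap K L (B x y))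
    (hB : B.Nondegenerate) (hsymm : B.IsSymm) (hsymm' : B'.IsSymm) (hπ : Irreducible π)
    (hπS : Irreducible (algebraMap R S π)) (h2 : IsUnit (2 : S))
    (haniso : ∀ x ∈ M, B x x ∈ (1 : Submodule R K) → x ∈ B.dualSubmodule M)
    (hDN : B.dualSubmodule M ⋖ N) (hNM : N ⋖ M)
    (hσ : ∀ x : S, algebraMap R S π ∣ σ x - x ↔ ∃ r : R, algebraMap R S π ∣ x - algebraMap R S r)
    (hsqrt : ∀ r : R, ∃ u : S, algebraMap R S π ∣ u ^ 2 - algebraMap R S r) :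
    ∃ e ∈ M, ∃ v : U, ∃ u : S, algebraMap R S π ∣ σ u + u ∧
      IsHyperbolicPair B' (extendLattice S f M) (f v + u • f e) (f v - u • f e) := by
  have hlocal := isLocalHom_algebraMap_of_irreducible hπ hπS
  obtain ⟨e, v, hframe, hanisotropic⟩ := hM.exists_isOrthogonalFrame hπ haniso hDN hNM
  obtain ⟨r, u, hr, hur, hu⟩ :=
    hframe.exists_dvd_sq_sub_of_anisotropic hsymm hM hπ hπS hsqrt hanisotropic
  have hu_unit : IsUnit u := not_not.1 fun hunit =>
    hu 0 (by rw [map_zero, sub_zero]; exact (dvd_iff_not_isUnit hπS).2 hunit)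
  have hframe' : IsOrthogonalFrame B' (extendLattice S f M) (f e) (f v) :=
    hframe.extend hf hBB' hB
  have hvv : B' (f v) (f v) = -(algebraMap R S r • B' (f e) (f e)) := by
    rw [hBB', hBB', algebraMap_smul, ← neg_eq_iff_eq_neg, ← map_neg, ← hr]
    exact map_smul (IsScalarTower.toAlgHom R K L) r (B e e)
  have hiso : B' (f v) (f v) + u ^ 2 • B' (f e) (f e) ∈ (1 : Submodule S L) := by
    rw [hvv, neg_add_eq_sub, ← sub_smul]
    exact smul_mem_one_of_dvd
      ((hM.extend hf hBB' hB).smul_apply_mem_one hframe'.left_mem hframe'.left_mem) hur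
  exact ⟨e, hframe.left_mem, v, u, dvd_map_add_self_of_dvd_sq_sub hπS.prime hσ hur hu,
    hframe'.isHyperbolicPair hsymm' h2 hu_unit hiso⟩

theorem IsVertexLattice.exists_selfDual_pair_map_swap (hM : IsVertexLattice B π M)
    (hf : IsBaseChange L f) (hBB' : ∀ x y, B' (f x) (f y) = algebraMap K L (B x y))
    (hB : B.Nondegenerate) (hsymm : B.IsSymm) (hsymm' : B'.IsSymm) (hπ : Irreducible π)
    (hπS : Irreducible (algebraMap R S π)) (h2 : IsUnit (2 : S))
    (haniso : ∀ x ∈ M, B x x ∈ (1 : Submodule R K) → x ∈ B.dualSubmodule M)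
    (hDN : B.dualSubmodule M ⋖ N) (hNM : N ⋖ M)
    (hσ : ∀ x : S, algebraMap R S π ∣ σ x - x ↔ ∃ r : R, algebraMap R S π ∣ x - algebraMap R S r)
    (hsqrt : ∀ r : R, ∃ u : S, algebraMap R S π ∣ u ^ 2 - algebraMap R S r)
    [RingHomSurjective σ] {Φ : T →ₛₗ[σ] T} (hΦ : ∀ x, Φ (f x) = f x) :
    ∃ N₁ N₂ : Submodule S T, N₁ ≠ N₂ ∧
      (∀ N' : Submodule S T, (B'.dualSubmodule N' = N' ∧
        extendLattice S f (B.dualSubmodule M) ≤ N' ∧ N' ≤ extendLattice S f M) ↔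
          N' = N₁ ∨ N' = N₂) ∧
      N₁.map Φ = N₂ ∧ N₂.map Φ = N₁ := by
  obtain ⟨e, he, v, u, hu, hpair⟩ := hM.exists_isHyperbolicPair_extendLattice hf hBB' hB hsymm
    hsymm' hπ hπS h2 haniso hDN hNM hσ hsqrt
  have hM' : IsVertexLattice B' (algebraMap R S π) (extendLattice S f M) := hM.extend hf hBB' hB
  have hmapD := map_extendLattice hΦ (B.dualSubmodule M)
  rw [extendLattice_dualSubmodule hf hBB' hB] at hmapD ⊢
  have hue : (σ u + u) • f e ∈ B'.dualSubmodule (extendLattice S f M) :=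
    hM'.smul_mem_dual_of_dvd hu (subset_span (Set.mem_image_of_mem f he))
  have hue' : (σ (-u) + -u) • f e ∈ B'.dualSubmodule (extendLattice S f M) := by
    rwa [map_neg, ← neg_add, neg_smul, neg_mem_iff]
  refine ⟨_, _, hpair.sup_span_left_ne_sup_span_right hsymm' hM', hpair.selfDual_iff hsymm' hM'
    (dualSubmodule_dualSubmodule_extendLattice hf hBB' hB hsymm') hπS h2,
    map_sup_span_add_smul hmapD (hΦ e) (hΦ v) hue, ?_⟩
  simpa only [neg_smul, ← sub_eq_add_neg, sub_neg_eq_add] using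
    map_sup_span_add_smul hmapD (hΦ e) (hΦ v) hue'

end Frobenius

theorem exists_ringHom_algebraMap_comp_eq {R K S L : Type*} [CommRing R] [CommRing K] [Algebra R K]
    [CommRing S] [CommRing L] [Algebra S L] [FaithfulSMul S L] [Algebra K L]
    (h : ∀ c : R, algebraMap K L (algebraMap R K c) ∈ (algebraMap S L).range) :
    ∃ j : R →+* S, ∀ c, algebraMap S L (j c) = algebraMap K L (algebraMap R K c) := by
  let g := ((algebraMap K L).comp (algebraMap R K)).codRestrict (algebraMap S L).range h
  let i := RingEquiv.ofBijective (algebraMap S L).rangeRestrict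
    ⟨fun _ _ hxy => FaithfulSMul.algebraMap_injective S L (congrArg Subtype.val hxy),
      (algebraMap S L).rangeRestrict_surjective⟩
  exact ⟨i.symm.toRingHom.comp g, fun c => congrArg Subtype.val (i.apply_symm_apply (g c))⟩

theorem polarBilin_isSymm {R M : Type*} [CommRing R] [AddCommGroup M] [Module R M]
    (Q : QuadraticForm R M) : LinearMap.BilinForm.IsSymm (polarBilin Q) :=
  ⟨polar_comm Q⟩

theorem polarBilin_baseChange_one_tmul {R A M : Type*} [CommRing R] [CommRing A] [Algebra R A]
    [Invertible (2 : R)] [AddCommGroup M] [Module R M] (Q : QuadraticForm R M) (x y : M) :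
    polarBilin (Q.baseChange A) (1 ⊗ₜ[R] x) (1 ⊗ₜ[R] y) = algebraMap R A (polarBilin Q x y) := by
  simp only [polarBilin_apply_apply, polar, ← TensorProduct.tmul_add,
    QuadraticForm.baseChange_tmul, mul_one, Algebra.smul_def, map_sub]

section Semilinear

variable {S L T : Type*} [CommRing S] [CommRing L] [Algebra S L] [AddCommGroup T] [Module S T]
  [Module L T] [IsScalarTower S L T] {σ : S →+* S} {τ : L → L} {F : Type*}
  [FunLike F T T] [AddMonoidHomClass F T T]

/-- An additive map of `L`-modules that is semilinear over a self-map `τ` of `L`, regarded as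
a map of `S`-modules that is semilinear over the restriction `σ` of `τ` to `S`. -/
def semilinearRestrictScalars (hτ : ∀ s, τ (algebraMap S L s) = algebraMap S L (σ s)) (Φ : F)
    (hΦ : ∀ (a : L) (x : T), Φ (a • x) = τ a • Φ x) : T →ₛₗ[σ] T where
  toFun := Φ
  map_add' := map_add Φ
  map_smul' s x := by rw [← algebraMap_smul L s x, hΦ, hτ, algebraMap_smul]

theorem map_semilinearRestrictScalars [RingHomSurjective σ]
    (hτ : ∀ s, τ (algebraMap S L s) = algebraMap S L (σ s)) (Φ : F)
    (hΦ : ∀ (a : L) (x : T), Φ (a • x) = τ a • Φ x) (N : Submodule S T) :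
    N.map (semilinearRestrictScalars hτ Φ hΦ) = span S (Φ '' N) :=
  (span_eq (N.map (semilinearRestrictScalars hτ Φ hΦ))).symm

end Semilinear

section Witt

variable {p : ℕ} [Fact p.Prime]

theorem isUnit_two_padicInt (hp : p ≠ 2) : IsUnit (2 : ℤ_[p]) := by
  rw [PadicInt.isUnit_iff, ← Nat.cast_ofNat, PadicInt.norm_natCast_eq_one_iff,
    Nat.coprime_primes Fact.out Nat.prime_two]
  exact hp

theorem polarBilin_self_mem_one_iff {U : Type*} [AddCommGroup U] [Module ℚ_[p] U] (hp : p ≠ 2)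
    (Q : QuadraticForm ℚ_[p] U) {x : U} :
    polarBilin Q x x ∈ (1 : Submodule ℤ_[p] ℚ_[p]) ↔ Q x ∈ (1 : Submodule ℤ_[p] ℚ_[p]) := by
  rw [polarBilin_apply_apply, polar_self, ← Nat.cast_smul_eq_nsmul ℤ_[p]]
  exact smul_mem_iff_of_isUnit _ (isUnit_two_padicInt hp)

theorem exists_natCast_dvd_sub (r : ℤ_[p]) : ∃ n : ℕ, (p : ℤ_[p]) ∣ r - n := by
  obtain ⟨n, -, hn⟩ := PadicInt.exists_mem_range r
  rw [PadicInt.maximalIdeal_eq_span_p, Ideal.mem_span_singleton] at hn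
  exact ⟨n, hn⟩

theorem pow_char_eq_self_iff_exists_natCast {k : Type*} [Field k] [CharP k p] {x : k} :
    x ^ p = x ↔ ∃ n : ℕ, x = n := by
  constructor
  · intro hx
    have hbot : x ∈ (⊥ : Subfield k) := (Subfield.mem_bot_iff_pow_eq_self k p).2 hx
    obtain ⟨z, rfl⟩ := (bot_le : ⊥ ≤ (ZMod.castHom dvd_rfl k).fieldRange) hbot
    exact ⟨z.val, by rw [← map_natCast (ZMod.castHom dvd_rfl k), ZMod.natCast_zmod_val]⟩
  · rintro ⟨n, rfl⟩
    exact map_natCast (frobenius k p) n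

variable {k : Type*} [Field k] [CharP k p] [PerfectRing k p]

theorem p_dvd_iff_constantCoeff_eq_zero {x : WittVector p k} :
    (p : WittVector p k) ∣ x ↔ WittVector.constantCoeff x = 0 := by
  rw [← Ideal.mem_span_singleton]
  exact WittVector.mem_span_p_iff_coeff_zero_eq_zero x

theorem p_dvd_frobenius_sub_self_iff {x : WittVector p k} :
    (p : WittVector p k) ∣ WittVector.frobenius x - x ↔
      ∃ n : ℕ, WittVector.constantCoeff x = n := by
  rw [p_dvd_iff_constantCoeff_eq_zero, map_sub, sub_eq_zero,
    ← pow_char_eq_self_iff_exists_natCast (p := p)]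
  exact Eq.congr_left (WittVector.coeff_frobenius_charP p x 0)

instance : RingHomSurjective (WittVector.frobenius : WittVector p k →+* WittVector p k) :=
  ⟨(WittVector.frobenius_bijective p k).surjective⟩

theorem fractionRing_frobenius_algebraMap (x : WittVector p k) :
    WittVector.FractionRing.frobenius p k (algebraMap _ _ x) =
      algebraMap (WittVector p k) (FractionRing (WittVector p k)) (WittVector.frobenius x) :=
  IsFractionRing.ringEquivOfRingEquiv_algebraMap _ x

variable [Algebra ℤ_[p] (WittVector p k)]

theorem exists_constantCoeff_algebraMap_eq (r : ℤ_[p]) :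
    ∃ n : ℕ, WittVector.constantCoeff (algebraMap ℤ_[p] (WittVector p k) r) = n := by
  obtain ⟨n, hn⟩ := exists_natCast_dvd_sub r
  have hdvd := map_dvd (algebraMap ℤ_[p] (WittVector p k)) hn
  rw [map_natCast, map_sub, map_natCast, p_dvd_iff_constantCoeff_eq_zero, map_sub, map_natCast,
    sub_eq_zero] at hdvd
  exact ⟨n, hdvd⟩

theorem p_dvd_frobenius_sub_self_iff_exists_padicInt {x : WittVector p k} :
    (p : WittVector p k) ∣ WittVector.frobenius x - x ↔
      ∃ r : ℤ_[p], (p : WittVector p k) ∣ x - algebraMap ℤ_[p] (WittVector p k) r := by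
  rw [p_dvd_frobenius_sub_self_iff]
  simp only [p_dvd_iff_constantCoeff_eq_zero, map_sub, sub_eq_zero]
  constructor
  · rintro ⟨n, hn⟩
    exact ⟨n, by rw [hn, map_natCast, map_natCast]⟩
  · rintro ⟨r, hr⟩
    rw [hr]
    exact exists_constantCoeff_algebraMap_eq r

theorem exists_p_dvd_sq_sub_algebraMap (hsq : ∀ n : ℕ, IsSquare (n : k)) (r : ℤ_[p]) :
    ∃ u : WittVector p k,
      (p : WittVector p k) ∣ u ^ 2 - algebraMap ℤ_[p] (WittVector p k) r := by
  obtain ⟨n, hn⟩ := exists_constantCoeff_algebraMap_eq (k := k) r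
  obtain ⟨z, hz⟩ := hsq n
  obtain ⟨u, rfl⟩ := WittVector.constantCoeff_surjective (p := p) z
  refine ⟨u, p_dvd_iff_constantCoeff_eq_zero.2 ?_⟩
  rw [map_sub, map_pow, hn, hz, pow_two, sub_self]

variable [Algebra ℚ_[p] (FractionRing (WittVector p k))]
  [SMulCommClass ℚ_[p] (WittVector p k) (FractionRing (WittVector p k))]
  [IsScalarTower ℤ_[p] ℚ_[p] (FractionRing (WittVector p k))] {U : Type*} [AddCommGroup U]
  [Module ℚ_[p] U] [Module ℤ_[p] U] [IsScalarTower ℤ_[p] ℚ_[p] U]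

theorem IsVertexLattice.exists_selfDual_pair_map_frobenius_swap {Q : QuadraticForm ℚ_[p] U}
    {M N : Submodule ℤ_[p] U} [IsLattice ℚ_[p] M]
    (hM : IsVertexLattice (polarBilin Q) (p : ℤ_[p]) M) (hp : p ≠ 2)
    (hQ : LinearMap.BilinForm.Nondegenerate (polarBilin Q))
    (haniso : ∀ x ∈ M, Q x ∈ (1 : Submodule ℤ_[p] ℚ_[p]) → x ∈ dualSubmodule (polarBilin Q) M)
    (hDN : dualSubmodule (polarBilin Q) M ⋖ N) (hNM : N ⋖ M)
    (hsq : ∀ n : ℕ, IsSquare (n : k))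
    {Φ : TensorProduct ℚ_[p] (FractionRing (WittVector p k)) U
      →ₛₗ[(WittVector.frobenius : WittVector p k →+* WittVector p k)]
      TensorProduct ℚ_[p] (FractionRing (WittVector p k)) U}
    (hΦ : ∀ x : U, Φ (1 ⊗ₜ[ℚ_[p]] x) = 1 ⊗ₜ[ℚ_[p]] x) :
    ∃ N₁ N₂ : Submodule (WittVector p k) (TensorProduct ℚ_[p] (FractionRing (WittVector p k)) U),
      N₁ ≠ N₂ ∧
      (∀ N', (dualSubmodule (polarBilin (Q.baseChange (FractionRing (WittVector p k)))) N' = N' ∧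
        extendLattice _ (TensorProduct.mk ℚ_[p] _ U 1) (dualSubmodule (polarBilin Q) M) ≤ N' ∧
        N' ≤ extendLattice _ (TensorProduct.mk ℚ_[p] _ U 1) M) ↔ N' = N₁ ∨ N' = N₂) ∧
      N₁.map Φ = N₂ ∧ N₂.map Φ = N₁ := by
  have hcast : algebraMap ℤ_[p] (WittVector p k) (p : ℤ_[p]) = p := map_natCast _ p
  have h2 : IsUnit (2 : WittVector p k) := by
    simpa only [map_ofNat] using (isUnit_two_padicInt hp).map (algebraMap ℤ_[p] (WittVector p k))
  refine hM.exists_selfDual_pair_map_swap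
    (TensorProduct.isBaseChange ℚ_[p] U (FractionRing (WittVector p k)))
    (polarBilin_baseChange_one_tmul Q) hQ (polarBilin_isSymm _) (polarBilin_isSymm _)
    PadicInt.irreducible_p ?_ h2
    (fun x hx hQx => haniso x hx ((polarBilin_self_mem_one_iff hp Q).1 hQx)) hDN hNM ?_ ?_ hΦ
  · exact hcast ▸ WittVector.irreducible p
  · exact fun x => hcast ▸ p_dvd_frobenius_sub_self_iff_exists_padicInt
  · exact fun r => hcast ▸ exists_p_dvd_sq_sub_algebraMap hsq r

end Witt

end VertexLattice

open VertexLattice in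
theorem statement_12_general {k : Type*} [Field k] [CharP k p] [PerfectRing k p]
    [Algebra ℚ_[p] (FractionRing (WittVector p k))]
    [SMulCommClass ℚ_[p] (WittVector p k) (FractionRing (WittVector p k))]
    (hsq : ∀ n : ℕ, IsSquare (n : k)) (hp : p ≠ 2) (Q : QuadraticForm ℚ_[p] V)
    (hQ : LinearMap.SeparatingLeft (QuadraticMap.polarBilin Q))
    (Λ : Submodule ℤ_[p] V) (hΛ : IsZpLattice p Λ)
    (hvertex : ∀ x ∈ Λ, (p : ℤ_[p]) • x ∈ zpDual p Q Λ)
    (hvertex' : zpDual p Q Λ ≤ Λ)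
    (htype : zpChainLength p (zpDual p Q Λ) Λ 2)
    (haniso : ∀ x ∈ Λ, Q x ∈ (1 : Submodule ℤ_[p] ℚ_[p]) → x ∈ zpDual p Q Λ)
    (hcomp : ∀ c : ℤ_[p],
      algebraMap ℚ_[p] (FractionRing (WittVector p k)) (algebraMap ℤ_[p] ℚ_[p] c) ∈
        (algebraMap (WittVector p k) (FractionRing (WittVector p k))).range)
    (Φ : TensorProduct ℚ_[p] (FractionRing (WittVector p k)) V ≃+
      TensorProduct ℚ_[p] (FractionRing (WittVector p k)) V)
    (hΦ : ∀ (a : FractionRing (WittVector p k)) (v : V),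
      Φ (a ⊗ₜ[ℚ_[p]] v) = (WittVector.FractionRing.frobenius p k a) ⊗ₜ[ℚ_[p]] v)
    (hΦsemi : ∀ (a : FractionRing (WittVector p k))
      (w : TensorProduct ℚ_[p] (FractionRing (WittVector p k)) V),
      Φ (a • w) = WittVector.FractionRing.frobenius p k a • Φ w) :
    ∃ L₁ L₂ :
        Submodule (WittVector p k) (TensorProduct ℚ_[p] (FractionRing (WittVector p k)) V),
      L₁ ≠ L₂ ∧
      (∀ L : Submodule (WittVector p k) (TensorProduct ℚ_[p] (FractionRing (WittVector p k)) V),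
        (wDual p k (Q.baseChange (FractionRing (WittVector p k))) L = L ∧
          baseChangeLattice p k (zpDual p Q Λ) ≤ L ∧ L ≤ baseChangeLattice p k Λ) ↔
          (L = L₁ ∨ L = L₂)) ∧
      phiStar p k Φ L₁ = L₂ ∧ phiStar p k Φ L₂ = L₁ := by
  obtain ⟨j, hj⟩ := exists_ringHom_algebraMap_comp_eq hcomp
  let : Algebra ℤ_[p] (WittVector p k) := j.toAlgebra
  have : IsScalarTower ℤ_[p] ℚ_[p] (FractionRing (WittVector p k)) := .of_algebraMap_eq hj
  have : Submodule.IsLattice ℚ_[p] Λ := ⟨hΛ.1, hΛ.2⟩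
  obtain ⟨F, hF0, hF2, hF⟩ := htype
  have hΛ' : IsVertexLattice (polarBilin Q) (p : ℤ_[p]) Λ := ⟨hvertex', hvertex⟩
  have hB := (polarBilin_isSymm Q).isRefl.nondegenerate_iff_separatingLeft.2 hQ
  have hfix (v : V) : Φ (1 ⊗ₜ[ℚ_[p]] v) = 1 ⊗ₜ[ℚ_[p]] v := by rw [hΦ, map_one]
  obtain ⟨L₁, L₂, hne, hselfDual, h₁, h₂⟩ := hΛ'.exists_selfDual_pair_map_frobenius_swap hp hB
    haniso (hF0 ▸ hF 0) (hF2 ▸ hF 1) hsq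
    (Φ := semilinearRestrictScalars fractionRing_frobenius_algebraMap Φ hΦsemi) hfix
  rw [map_semilinearRestrictScalars] at h₁ h₂
  exact ⟨L₁, L₂, hne, hselfDual, h₁, h₂⟩

theorem statement_12 (hp : p ≠ 2) [FiniteDimensional ℚ_[p] V]
    (Q : QuadraticForm ℚ_[p] V)
    (hQ : LinearMap.SeparatingLeft (QuadraticMap.polarBilin Q))
    (Λ : Submodule ℤ_[p] V) (hΛ : IsZpLattice p Λ)
    (hvertex : ∀ x ∈ Λ, (p : ℤ_[p]) • x ∈ zpDual p Q Λ)
    (hvertex' : zpDual p Q Λ ≤ Λ)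
    (htype : zpChainLength p (zpDual p Q Λ) Λ 2)
    (haniso : ∀ x ∈ Λ, Q x ∈ (1 : Submodule ℤ_[p] ℚ_[p]) → x ∈ zpDual p Q Λ)
    -- the embedding `ℚ_p → K₀` restricts to `ℤ_p → W₀`
    (hcomp : ∀ c : ℤ_[p],
      algebraMap ℚ_[p] (FractionRing (WittVector p 𝔽)) (algebraMap ℤ_[p] ℚ_[p] c) ∈
        (algebraMap (WittVector p 𝔽) (FractionRing (WittVector p 𝔽))).range)
    -- `Φ = id_V ⊗ σ`, with `σ` the Frobenius of `K₀`: a `σ`-semilinear additive bijection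
    -- acting as `a ⊗ v ↦ σ a ⊗ v` on pure tensors
    (Φ : TensorProduct ℚ_[p] (FractionRing (WittVector p 𝔽)) V ≃+
      TensorProduct ℚ_[p] (FractionRing (WittVector p 𝔽)) V)
    (hΦ : ∀ (a : FractionRing (WittVector p 𝔽)) (v : V),
      Φ (a ⊗ₜ[ℚ_[p]] v) = (WittVector.FractionRing.frobenius p 𝔽 a) ⊗ₜ[ℚ_[p]] v)
    (hΦsemi : ∀ (a : FractionRing (WittVector p 𝔽))
      (w : TensorProduct ℚ_[p] (FractionRing (WittVector p 𝔽)) V),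
      Φ (a • w) = WittVector.FractionRing.frobenius p 𝔽 a • Φ w) :
    ∃ L₁ L₂ :
        Submodule (WittVector p 𝔽) (TensorProduct ℚ_[p] (FractionRing (WittVector p 𝔽)) V),
      L₁ ≠ L₂ ∧
      (∀ L : Submodule (WittVector p 𝔽) (TensorProduct ℚ_[p] (FractionRing (WittVector p 𝔽)) V),
        (wDual p 𝔽 (Q.baseChange (FractionRing (WittVector p 𝔽))) L = L ∧
          baseChangeLattice p 𝔽 (zpDual p Q Λ) ≤ L ∧ L ≤ baseChangeLattice p 𝔽 Λ) ↔
          (L = L₁ ∨ L = L₂)) ∧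
      phiStar p 𝔽 Φ L₁ = L₂ ∧ phiStar p 𝔽 Φ L₂ = L₁ := by
  exact statement_12_general p (fun _ => IsAlgClosed.exists_eq_mul_self _) hp Q hQ Λ hΛ hvertex
    hvertex' htype haniso hcomp Φ hΦ hΦsemi

end BaseChange
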